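/- arXiv:1506.08071 — 2 statements merged into one kernel-verified Lean document; each statement's English description precedes it below -/
import Mathlib

section
/- The group A_n^× acts transitively on the set of invertible antisymmetric elements of A_n via a·t = a t a*; equivalently, every invertible antisymmetric element t ∈ A_n^asym ∩ A_n^× can be written as t = Δ·a a* for some a ∈ A_n^×. -/
open Polynomial Matrix

noncomputable section

abbrev TruncPoly (K : Type) [CommRing K] (n : ℕ) := AdjoinRoot (X ^ n : K[X])

def trStar (K : Type) [CommRing K] (σ : K →+* K) (n : ℕ) :
    TruncPoly K n →+* TruncPoly K n :=
  AdjoinRoot.lift ((AdjoinRoot.of _).comp σ) (-(AdjoinRoot.root _)) (by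
    have h : (AdjoinRoot.root (X ^ n : K[X])) ^ n = 0 := by
      rw [← AdjoinRoot.mk_X, ← map_pow, AdjoinRoot.mk_self]
    rw [eval₂_pow, eval₂_X, neg_pow, h, mul_zero])

/-! Two invertible antisymmetric elements differ by a symmetric unit `s`, so it suffices to write
`s` as `a * a⋆`. The constant coefficient `c` of `s` is fixed by `σ`, hence is a norm `b * σ b`:
over a finite field of odd characteristic, the form `u ^ 2 - Δ ^ 2 * v ^ 2` represents every element
fixed by `σ`, and it is the norm of `u + v * Δ`. Since `s - c` is nilpotent, Newton's method solves
`c * r ^ 2 = s` with a unique `r` congruent to `1` modulo nilpotents; by uniqueness `r⋆ = r`, so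
`a = b * r` works. -/

section SquareRoots

variable {R : Type*} [CommRing R] {c s : R}

theorem existsUnique_isNilpotent_one_sub_and_mul_sq_eq (h2 : IsUnit (2 : R)) (hc : IsUnit c)
    (hcs : IsNilpotent (c - s)) : ∃! r : R, IsNilpotent (1 - r) ∧ c * r ^ 2 = s := by
  have hroot : IsNilpotent (aeval (1 : R) (C c * X ^ 2 - C s)) := by simpa using hcs
  have hderiv : IsUnit (aeval (1 : R) (derivative (C c * X ^ 2 - C s))) := by
    simpa [one_add_one_eq_two] using hc.mul h2
  simpa [sub_eq_zero] using existsUnique_nilpotent_sub_and_aeval_eq_zero hroot hderiv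

theorem exists_isUnit_map_eq_self_and_mul_sq_eq (φ : R →+* R) (h2 : IsUnit (2 : R))
    (hc : IsUnit c) (hcs : IsNilpotent (c - s)) (hφc : φ c = c) (hφs : φ s = s) :
    ∃ r : R, IsUnit r ∧ φ r = r ∧ c * r ^ 2 = s := by
  obtain ⟨r, ⟨hr, hrs⟩, hunique⟩ := existsUnique_isNilpotent_one_sub_and_mul_sq_eq h2 hc hcs
  have hunit : IsUnit r := by simpa using hr.isUnit_one_sub
  have hφr : IsNilpotent (1 - φ r) := by simpa using hr.map φ
  have hφrs : c * φ r ^ 2 = s := by simpa [hφc, hφs] using congrArg φ hrs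
  exact ⟨r, hunit, hunique (φ r) ⟨hφr, hφrs⟩, hrs⟩

end SquareRoots

section FiniteFieldNorm

theorem ringChar_ne_two_of_odd_card {F : Type*} [Field F] [Fintype F]
    (hF : Odd (Fintype.card F)) : ringChar F ≠ 2 :=
  fun h => Nat.not_even_iff_odd.mpr hF <|
    Nat.even_iff.mpr <| FiniteField.even_card_of_char_two h

theorem exists_sq_sub_mul_sq_eq {F : Type*} [Field F] [Finite F] (hF : ringChar F ≠ 2)
    {δ : F} (hδ : δ ≠ 0) (d : F) : ∃ u v : F, u ^ 2 - δ * v ^ 2 = d := by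
  have := Fintype.ofFinite F
  obtain ⟨u, v, huv⟩ := FiniteField.exists_root_sum_quadratic
    (degree_X_pow_sub_C two_pos d) (degree_C_mul_X_pow 2 (neg_ne_zero.mpr hδ))
    (FiniteField.odd_card_of_char_ne_two hF)
  simp only [eval_sub, eval_mul, eval_pow, eval_X, eval_C] at huv
  exact ⟨u, v, by linear_combination huv⟩

theorem exists_eq_mul_map_of_map_eq_self {K : Type*} [Field K] [Finite K]
    (hK : ringChar K ≠ 2) (σ : K →+* K) {Δ : K} (hΔ : Δ ≠ 0) (hσΔ : σ Δ = -Δ)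
    {d : K} (hd : σ d = d) : ∃ b : K, d = b * σ b := by
  let F : Subfield K := σ.eqLocusField (RingHom.id K)
  have hF : ringChar F ≠ 2 := by rwa [Algebra.ringChar_eq F K]
  have hΔF : Δ ^ 2 ∈ F := by
    change σ (Δ ^ 2) = Δ ^ 2
    rw [map_pow, hσΔ, neg_sq]
  have hδ : (⟨Δ ^ 2, hΔF⟩ : F) ≠ 0 := fun h => pow_ne_zero 2 hΔ (congrArg Subtype.val h)
  obtain ⟨⟨u, hu⟩, ⟨v, hv⟩, huv⟩ := exists_sq_sub_mul_sq_eq hF hδ ⟨d, hd⟩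
  have hnorm : u ^ 2 - Δ ^ 2 * v ^ 2 = d := congrArg Subtype.val huv
  have hσu : σ u = u := hu
  have hσv : σ v = v := hv
  refine ⟨u + v * Δ, ?_⟩
  rw [map_add, map_mul, hσu, hσv, hσΔ]
  linear_combination -hnorm

end FiniteFieldNorm

namespace TruncPoly

variable {K : Type} [CommRing K] (σ : K →+* K) {n : ℕ}

@[simp]
theorem trStar_of (c : K) :
    trStar K σ n (AdjoinRoot.of _ c) = AdjoinRoot.of _ (σ c) := by
  simp [trStar]

@[simp]
theorem trStar_root : trStar K σ n (AdjoinRoot.root _) = -AdjoinRoot.root _ := by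
  simp [trStar]

theorem isNilpotent_root : IsNilpotent (AdjoinRoot.root (X ^ n : K[X])) :=
  ⟨n, by rw [← AdjoinRoot.mk_X, ← map_pow, AdjoinRoot.mk_self]⟩

variable [NeZero n]

/-- The constant coefficient of a truncated polynomial, as the ring homomorphism `x ↦ 0`. It needs
`n ≠ 0`, since `TruncPoly K 0` is the zero ring. -/
def constCoeff : TruncPoly K n →+* K :=
  AdjoinRoot.lift (RingHom.id K) 0 (by simp [NeZero.ne n])

theorem constCoeff_mk (f : K[X]) :
    constCoeff (AdjoinRoot.mk (X ^ n) f) = f.coeff 0 := by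
  simp [constCoeff, AdjoinRoot.lift_mk, coeff_zero_eq_eval_zero]

theorem constCoeff_trStar (s : TruncPoly K n) :
    constCoeff (trStar K σ n s) = σ (constCoeff s) := by
  have hcomp : constCoeff.comp (trStar K σ n) = σ.comp constCoeff := by
    apply AdjoinRoot.ringHom_ext
    · ext c
      simp [constCoeff]
    · simp [constCoeff]
  exact RingHom.congr_fun hcomp s

theorem isNilpotent_of_constCoeff_sub (s : TruncPoly K n) :
    IsNilpotent (AdjoinRoot.of _ (constCoeff s) - s) := by
  obtain ⟨f, rfl⟩ := AdjoinRoot.mk_surjective s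
  have hdecomp : AdjoinRoot.mk (X ^ n) f =
      AdjoinRoot.mk _ f.divX * AdjoinRoot.root _ + AdjoinRoot.of _ (f.coeff 0) := by
    rw [← AdjoinRoot.mk_X, ← AdjoinRoot.mk_C, ← map_mul, ← map_add, divX_mul_X_add]
  rw [constCoeff_mk, hdecomp, sub_add_cancel_right]
  exact ((Commute.all _ _).isNilpotent_mul_left isNilpotent_root).neg

variable {σ} (h2 : IsUnit (2 : K))
  (hnorm : ∀ c : K, IsUnit c → σ c = c → ∃ b : K, c = b * σ b)

include h2 hnorm

theorem exists_isUnit_eq_mul_trStar {s : TruncPoly K n} (hs : IsUnit s)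
    (hsymm : trStar K σ n s = s) :
    ∃ a : TruncPoly K n, IsUnit a ∧ s = a * trStar K σ n a := by
  have hc : IsUnit (constCoeff s) := hs.map constCoeff
  have hσc : σ (constCoeff s) = constCoeff s := by rw [← constCoeff_trStar, hsymm]
  obtain ⟨b, hb⟩ := hnorm _ hc hσc
  have hbu : IsUnit b := isUnit_of_mul_isUnit_left (hb ▸ hc)
  have htwo : IsUnit (2 : TruncPoly K n) := by
    rw [← map_ofNat (AdjoinRoot.of (X ^ n : K[X])) 2]
    exact h2.map _
  obtain ⟨r, hru, hrsymm, hr⟩ := exists_isUnit_map_eq_self_and_mul_sq_eq (trStar K σ n)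
    htwo (hc.map (AdjoinRoot.of _))
    (isNilpotent_of_constCoeff_sub s) (by rw [trStar_of, hσc]) hsymm
  refine ⟨AdjoinRoot.of _ b * r, (hbu.map _).mul hru, ?_⟩
  calc s = AdjoinRoot.of _ b * AdjoinRoot.of _ (σ b) * r ^ 2 := by rw [← map_mul, ← hb, hr]
    _ = AdjoinRoot.of _ b * r * trStar K σ n (AdjoinRoot.of _ b * r) := by
      rw [map_mul, trStar_of, hrsymm]
      ring

theorem exists_isUnit_eq_mul_mul_trStar {t₁ t₂ : TruncPoly K n}
    (ht₁ : trStar K σ n t₁ = -t₁) (hu₁ : IsUnit t₁)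
    (ht₂ : trStar K σ n t₂ = -t₂) (hu₂ : IsUnit t₂) :
    ∃ a : TruncPoly K n, IsUnit a ∧ t₂ = a * t₁ * trStar K σ n a := by
  obtain ⟨s, rfl⟩ : t₁ ∣ t₂ := hu₁.dvd
  have hsymm : trStar K σ n s = s := by
    rw [map_mul, ht₁, neg_mul, neg_inj] at ht₂
    exact hu₁.mul_left_cancel ht₂
  obtain ⟨a, ha, has⟩ :=
    exists_isUnit_eq_mul_trStar h2 hnorm (isUnit_of_mul_isUnit_right hu₂) hsymm
  exact ⟨a, ha, by rw [mul_right_comm, ← has, mul_comm]⟩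

end TruncPoly

theorem transitive_on_asym_units_general {K : Type} [CommRing K] (h2 : IsUnit (2 : K))
    (σ : K →+* K) (hnorm : ∀ c : K, IsUnit c → σ c = c → ∃ b : K, c = b * σ b)
    {Δ : K} (hΔ : IsUnit Δ) (hσΔ : σ Δ = -Δ) (n : ℕ) [NeZero n] :
    (∀ t₁ t₂ : TruncPoly K n,
        trStar K σ n t₁ = -t₁ → IsUnit t₁ → trStar K σ n t₂ = -t₂ → IsUnit t₂ →
        ∃ a : TruncPoly K n, IsUnit a ∧ t₂ = a * t₁ * trStar K σ n a) ∧
    (∀ t₀ : TruncPoly K n, trStar K σ n t₀ = -t₀ → IsUnit t₀ →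
        ∃ a : TruncPoly K n, IsUnit a ∧
          t₀ = AdjoinRoot.of (X ^ n : K[X]) Δ * (a * trStar K σ n a)) := by
  refine ⟨fun t₁ t₂ ht₁ hu₁ ht₂ hu₂ =>
    TruncPoly.exists_isUnit_eq_mul_mul_trStar h2 hnorm ht₁ hu₁ ht₂ hu₂, fun t₀ ht₀ hu₀ => ?_⟩
  obtain ⟨a, ha, hat₀⟩ := TruncPoly.exists_isUnit_eq_mul_mul_trStar h2 hnorm
    (by rw [TruncPoly.trStar_of, hσΔ, map_neg]) (hΔ.map (AdjoinRoot.of _)) ht₀ hu₀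
  exact ⟨a, ha, by rw [hat₀, mul_assoc, mul_left_comm]⟩

/-- `A_nˣ` acts transitively on invertible antisymmetric elements via
`a·t = a t a*`; equivalently every invertible antisymmetric `t` is of the form `Δ·a a*`. -/
theorem transitive_on_asym_units
    (p t q : ℕ) (hp : p.Prime) (hp2 : Odd p) (ht : 0 < t) (hq : q = p ^ t)
    (k K : Type) [Field k] [Fintype k] [Field K] [Fintype K] [Algebra k K]
    (hcardk : Fintype.card k = q) (hcardK : Fintype.card K = q ^ 2)
    (Δ : K) (hΔ : Δ ∉ Set.range (algebraMap k K))
    (hΔ2 : Δ ^ 2 ∈ Set.range (algebraMap k K))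
    (σ : K →+* K) (hσk : ∀ c : k, σ (algebraMap k K c) = algebraMap k K c)
    (hσne : σ ≠ RingHom.id K) (hσΔ : σ Δ = -Δ)
    (n : ℕ) (hn : 0 < n) :
    (∀ t₁ t₂ : TruncPoly K n,
        trStar K σ n t₁ = -t₁ → IsUnit t₁ → trStar K σ n t₂ = -t₂ → IsUnit t₂ →
        ∃ a : TruncPoly K n, IsUnit a ∧ t₂ = a * t₁ * trStar K σ n a) ∧
    (∀ t₀ : TruncPoly K n, trStar K σ n t₀ = -t₀ → IsUnit t₀ →
        ∃ a : TruncPoly K n, IsUnit a ∧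
          t₀ = AdjoinRoot.of (X ^ n : K[X]) Δ * (a * trStar K σ n a)) := by
  have : NeZero n := .of_pos hn
  have hK : ringChar K ≠ 2 := ringChar_ne_two_of_odd_card (by rw [hcardK, hq]; exact hp2.pow.pow)
  have hΔ0 : Δ ≠ 0 := fun h => hΔ ⟨0, by rw [h, map_zero]⟩
  exact transitive_on_asym_units_general (Ring.two_ne_zero hK).isUnit σ
    (fun _ _ hc => exists_eq_mul_map_of_map_eq_self hK σ hΔ0 hσΔ hc) hΔ0.isUnit hσΔ n
end
end

section
/- Let φ: A_n → A_n be an A_n-linear bijection. Then γ(b, φ(y)) = γ(b, y) holds for all antisymmetric b ∈ A_n^asym and all y ∈ A_n if and only if there exists a ∈ A_n with a a* = 1 such that φ(y) = a y for all y ∈ A_n. In particular, the unitary group U of A_n-linear automorphisms of A_n preserving γ is isomorphic to {a ∈ A_n : a a* = 1}. -/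
open Polynomial Matrix

noncomputable section

/-- The `i`-th coefficient of an element of `K[x]/(x^n)`. -/
def trCoeff (K : Type) [CommRing K] (n : ℕ) (a : TruncPoly K n) (i : ℕ) : K :=
  (AdjoinRoot.modByMonicHom (monic_X_pow n) a).coeff i

/-- The function `γ(b,m) = ψ(−2⁻¹·b·m*·m)`, where `ψ(∑ aᵢxⁱ) = ψ₀(a_{n−1})`. -/
def trGamma (K : Type) [Field K] (σ : K →+* K) (n : ℕ) (ψ₀ : AddChar K ℂ)
    (b m : TruncPoly K n) : ℂ :=
  ψ₀ (trCoeff K n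
    (-(AdjoinRoot.of (X ^ n : K[X]) (2⁻¹ : K)) * b * trStar K σ n m * m) (n - 1))

/-- The unitary group `U(χ,γ,c)`: all `A_n`-linear automorphisms of `A_n`
preserving `γ(b,·)` for every antisymmetric `b`. -/
def unitaryGroup (K : Type) [Field K] (σ : K →+* K) (n : ℕ) (ψ₀ : AddChar K ℂ) :
    Submonoid ((TruncPoly K n) ≃ₗ[TruncPoly K n] TruncPoly K n) where
  carrier := {φ | ∀ b y : TruncPoly K n, trStar K σ n b = -b →
    trGamma K σ n ψ₀ b (φ y) = trGamma K σ n ψ₀ b y}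
  one_mem' := by intro b y _; rfl
  mul_mem' := by
    intro f g hf hg b y hb
    have h1 := hf b (g y) hb
    have h2 := hg b y hb
    simpa [h2] using h1
/-- The group `{a ∈ A_n : a·a* = 1}` (as a submonoid of `A_n`). -/
def normOneGroup (K : Type) [Field K] (σ : K →+* K) (n : ℕ) :
    Submonoid (TruncPoly K n) where
  carrier := {a | a * trStar K σ n a = 1}
  one_mem' := by simp
  mul_mem' := by
    intro a b ha hb
    have ha' : a * trStar K σ n a = 1 := ha
    have hb' : b * trStar K σ n b = 1 := hb
    show a * b * trStar K σ n (a * b) = 1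
    rw [_root_.map_mul]
    calc a * b * (trStar K σ n a * trStar K σ n b)
        = (a * trStar K σ n a) * (b * trStar K σ n b) := by ring
      _ = 1 := by rw [ha', hb', one_mul]

/-!
An `A_n`-linear endomorphism of `A_n` is multiplication by `a = φ 1`, and it replaces `m* m` by
`a a* m* m` in `γ(b, m)`. So everything rests on nondegeneracy: a symmetric `s = a a* - 1` is zero
as soon as `ψ(b s) = 1` for every antisymmetric `b`. If some coefficient `s_i` were nonzero, then
`b = d s_i⁻¹ x^(n-1-i)` would give `ψ(b s) = ψ₀(d)`, and this `b` is antisymmetric exactly when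
`d̄ = (-1)^n d`. Hence the two restrictions of `ψ₀`, to `k` for even `n` and to `Δk` for odd `n`.
-/

section QuadraticExtension

theorem two_ne_zero_of_odd_card {R : Type*} [NonAssocRing R] [Nontrivial R] [Fintype R]
    (h : Odd (Fintype.card R)) : (2 : R) ≠ 0 := by
  intro h2
  obtain ⟨m, hm⟩ := h
  have hcard := Nat.cast_card_eq_zero R
  simp [hm, h2] at hcard

theorem finrank_eq_of_card_eq_pow {k V : Type*} [DivisionRing k] [Fintype k] [AddCommGroup V]
    [Fintype V] [Module k V] {r : ℕ} (h : Fintype.card V = Fintype.card k ^ r) :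
    Module.finrank k V = r :=
  Nat.pow_right_injective Fintype.one_lt_card <| (Module.card_eq_pow_finrank ..).symm.trans h

theorem adjoin_singleton_eq_top_of_finrank_prime {k K : Type*} [Field k] [Field K] [Algebra k K]
    (hp : (Module.finrank k K).Prime) {x : K} (hx : x ∉ Set.range (algebraMap k K)) :
    Algebra.adjoin k {x} = ⊤ := by
  have := Subalgebra.isSimpleOrder_of_finrank_prime k K hp
  refine (eq_bot_or_eq_top _).resolve_left fun h ↦ hx ?_
  exact Algebra.mem_bot.1 (h ▸ Algebra.self_mem_adjoin_singleton k x)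

theorem involutive_of_adjoin_singleton_eq_top {R A : Type*} [CommSemiring R] [Semiring A]
    [Algebra R A] {σ : A →ₐ[R] A} {x : A} (hx : Algebra.adjoin R {x} = ⊤) (hσ : σ (σ x) = x) :
    Function.Involutive σ := by
  have hσσ : σ.comp σ = AlgHom.id R A := AlgHom.ext_of_adjoin_eq_top hx (by simpa using hσ)
  exact DFunLike.congr_fun hσσ

theorem exists_apply_eq_neg_one_pow_mul_and_addChar_ne_one {R M : Type*} [Ring R] [Monoid M]
    {σ : R → R} {ψ : AddChar R M} (h₀ : ∃ d, σ d = d ∧ ψ d ≠ 1) (h₁ : ∃ d, σ d = -d ∧ ψ d ≠ 1)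
    (n : ℕ) : ∃ d, σ d = (-1) ^ n * d ∧ ψ d ≠ 1 := by
  rcases neg_one_pow_eq_or R n with hn | hn <;> simpa [hn]

end QuadraticExtension

section TruncPoly

variable {K : Type} [CommRing K] {σ : K →+* K} {n : ℕ}

theorem trCoeff_mk (f : K[X]) {i : ℕ} (hi : i < n) :
    trCoeff K n (AdjoinRoot.mk (X ^ n) f) i = f.coeff i := by
  conv_rhs => rw [← modByMonic_add_div f (X ^ n)]
  simp [trCoeff, coeff_X_pow_mul', hi.not_ge]

theorem truncPoly_ext {a b : TruncPoly K n}
    (h : ∀ i < n, trCoeff K n a i = trCoeff K n b i) : a = b := by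
  induction a using AdjoinRoot.induction_on with | ih f
  induction b using AdjoinRoot.induction_on with | ih g
  rw [AdjoinRoot.mk_eq_mk, X_pow_dvd_iff]
  intro i hi
  simpa [trCoeff_mk _ hi, sub_eq_zero] using h i hi

theorem trCoeff_sub (a b : TruncPoly K n) (i : ℕ) :
    trCoeff K n (a - b) i = trCoeff K n a i - trCoeff K n b i := by
  simp [trCoeff]

theorem trCoeff_of_mul_root_pow_mul (c : K) (a : TruncPoly K n) {i m : ℕ} (h : i + m < n) :
    trCoeff K n (AdjoinRoot.of _ c * AdjoinRoot.root _ ^ m * a) (i + m) =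
      c * trCoeff K n a i := by
  induction a using AdjoinRoot.induction_on with | ih f
  rw [← AdjoinRoot.mk_C, ← AdjoinRoot.mk_X, ← map_pow, ← map_mul, ← map_mul, trCoeff_mk _ h,
    trCoeff_mk _ (by omega), mul_assoc, coeff_C_mul, coeff_X_pow_mul]

theorem trStar_of_mul_root_pow (c : K) (m : ℕ) :
    trStar K σ n (AdjoinRoot.of _ c * AdjoinRoot.root _ ^ m) =
      AdjoinRoot.of _ ((-1) ^ m * σ c) * AdjoinRoot.root _ ^ m := by
  simp only [trStar, map_mul, map_pow, map_neg, map_one, AdjoinRoot.lift_of, AdjoinRoot.lift_root,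
    RingHom.comp_apply]
  ring

theorem trStar_mk (f : K[X]) :
    trStar K σ n (AdjoinRoot.mk _ f) = AdjoinRoot.mk _ ((f.map σ).comp (C (-1) * X)) := by
  induction f using Polynomial.induction_on' with
  | add f g hf hg => simp only [map_add, Polynomial.map_add, add_comp, hf, hg]
  | monomial m c =>
    rw [← C_mul_X_pow_eq_monomial, map_mul, map_pow, AdjoinRoot.mk_C, AdjoinRoot.mk_X,
      trStar_of_mul_root_pow]
    simp only [map_mul, map_pow, map_neg, map_one, Polynomial.map_mul, map_C, Polynomial.map_pow,
      map_X, neg_mul, one_mul, mul_comp, C_comp, pow_comp, X_comp, AdjoinRoot.mk_C, AdjoinRoot.mk_X]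
    ring

theorem trCoeff_trStar (a : TruncPoly K n) {i : ℕ} (hi : i < n) :
    trCoeff K n (trStar K σ n a) i = (-1) ^ i * σ (trCoeff K n a i) := by
  induction a using AdjoinRoot.induction_on with | ih f
  rw [trStar_mk, trCoeff_mk _ hi, trCoeff_mk _ hi, comp_C_mul_X_coeff, coeff_map, mul_comm]

theorem trStar_involutive (hσ : Function.Involutive σ) :
    Function.Involutive (trStar K σ n) := fun a ↦ truncPoly_ext fun i hi ↦ by
  simp [trCoeff_trStar _ hi, hσ _, ← mul_assoc, ← mul_pow]

end TruncPoly

section Gamma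

variable {K : Type} [Field K] {σ : K →+* K} {n : ℕ} {ψ₀ : AddChar K ℂ}

theorem eq_zero_of_forall_skew_addChar_trCoeff_mul_eq_one
    (hψ : ∃ d, σ d = (-1) ^ n * d ∧ ψ₀ d ≠ 1) {s : TruncPoly K n} (hs : trStar K σ n s = s)
    (h : ∀ b, trStar K σ n b = -b → ψ₀ (trCoeff K n (b * s) (n - 1)) = 1) : s = 0 := by
  obtain ⟨d, hd, hψd⟩ := hψ
  refine truncPoly_ext fun i hi ↦ ?_
  obtain ⟨m, rfl⟩ := Nat.exists_eq_add_of_lt hi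
  set c := trCoeff K (i + m + 1) s i with hc
  suffices c = 0 by simpa [trCoeff] using this
  by_contra hc0
  have hσc : σ c = (-1) ^ i * c := by
    have hσc' : (-1) ^ i * σ c = c := by rw [hc, ← trCoeff_trStar s hi, hs]
    rw [← hσc', ← mul_assoc, ← mul_pow, neg_one_mul, neg_neg, one_pow, one_mul, hσc']
  have hskew : (-1) ^ m * σ (d * c⁻¹) = -(d * c⁻¹) := by
    rw [map_mul, map_inv₀, hd, hσc]
    rcases neg_one_pow_eq_or K i with hi' | hi' <;> rcases neg_one_pow_eq_or K m with hm | hm <;>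
      simp [pow_add, hi', hm, inv_neg]
  have hval := h (AdjoinRoot.of _ (d * c⁻¹) * AdjoinRoot.root _ ^ m) (by
    rw [trStar_of_mul_root_pow, hskew, map_neg, neg_mul])
  rw [Nat.add_sub_cancel, trCoeff_of_mul_root_pow_mul _ _ (Nat.lt_succ_self _), ← hc,
    inv_mul_cancel_right₀ hc0] at hval
  exact hψd hval

theorem trGamma_neg_two_mul (h2 : (2 : K) ≠ 0) (b m : TruncPoly K n) :
    trGamma K σ n ψ₀ (-2 * b) m = ψ₀ (trCoeff K n (b * (m * trStar K σ n m)) (n - 1)) := by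
  have hof : AdjoinRoot.of (X ^ n : K[X]) 2⁻¹ * 2 = 1 := by
    rw [← map_ofNat (AdjoinRoot.of (X ^ n : K[X])) 2, ← map_mul, inv_mul_cancel₀ h2, map_one]
  rw [trGamma]
  congr 2
  linear_combination b * trStar K σ n m * m * hof

theorem trGamma_mul_left {a : TruncPoly K n} (ha : a * trStar K σ n a = 1)
    (b y : TruncPoly K n) : trGamma K σ n ψ₀ b (a * y) = trGamma K σ n ψ₀ b y := by
  rw [trGamma, trGamma, map_mul]
  congr 2
  linear_combination -AdjoinRoot.of (X ^ n : K[X]) 2⁻¹ * b * trStar K σ n y * y * ha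

theorem mul_trStar_eq_one_of_trGamma_eq (h2 : (2 : K) ≠ 0) (hσ : Function.Involutive σ)
    (hψ : ∃ d, σ d = (-1) ^ n * d ∧ ψ₀ d ≠ 1) {a : TruncPoly K n}
    (h : ∀ b, trStar K σ n b = -b → trGamma K σ n ψ₀ b a = trGamma K σ n ψ₀ b 1) :
    a * trStar K σ n a = 1 := by
  rw [← sub_eq_zero]
  refine eq_zero_of_forall_skew_addChar_trCoeff_mul_eq_one hψ ?_ fun b hb ↦ ?_
  · rw [map_sub, map_mul, trStar_involutive hσ a, map_one, mul_comm]
  · have hb' : trStar K σ n (-2 * b) = -(-2 * b) := by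
      rw [map_mul, hb, map_neg, map_ofNat, mul_neg]
    have hγ := h _ hb'
    rw [trGamma_neg_two_mul h2, trGamma_neg_two_mul h2, map_one, mul_one] at hγ
    rw [mul_sub, trCoeff_sub, AddChar.map_sub_eq_div, hγ, div_self (ψ₀.val_isUnit _).ne_zero]

end Gamma

theorem linearMap_apply_eq_apply_one_mul {A : Type*} [CommSemiring A] (φ : A →ₗ[A] A) (y : A) :
    φ y = φ 1 * y := by
  simpa [mul_comm] using φ.map_smul y 1

/-- The isomorphism `φ ↦ φ 1` from the unitary group to the elements with `a a* = 1`; its inverse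
sends `a` to multiplication by `a`. -/
def unitaryGroupEquiv {K : Type} [Field K] {σ : K →+* K} {n : ℕ} {ψ₀ : AddChar K ℂ}
    (h2 : (2 : K) ≠ 0) (hσ : Function.Involutive σ)
    (hψ : ∃ d, σ d = (-1) ^ n * d ∧ ψ₀ d ≠ 1) :
    unitaryGroup K σ n ψ₀ ≃* normOneGroup K σ n where
  toFun φ := ⟨φ.1 1, mul_trStar_eq_one_of_trGamma_eq h2 hσ hψ fun b hb ↦ φ.2 b 1 hb⟩
  invFun a := ⟨LinearEquiv.smulOfUnit (Units.mkOfMulEqOne a.1 _ a.2),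
    fun b y _ ↦ trGamma_mul_left a.2 b y⟩
  left_inv φ := Subtype.ext <| LinearEquiv.ext fun y ↦
    (linearMap_apply_eq_apply_one_mul φ.1.toLinearMap y).symm
  right_inv a := Subtype.ext (mul_one a.1)
  map_mul' φ χ := Subtype.ext (linearMap_apply_eq_apply_one_mul φ.1.toLinearMap (χ.1 1))

theorem unitary_group_description_general {K : Type} [Field K] (h2 : (2 : K) ≠ 0)
    {σ : K →+* K} (hσ : Function.Involutive σ) {n : ℕ} {ψ₀ : AddChar K ℂ}
    (hψ : ∃ d, σ d = (-1) ^ n * d ∧ ψ₀ d ≠ 1) :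
    (∀ φ : TruncPoly K n →ₗ[TruncPoly K n] TruncPoly K n,
      (∀ b y : TruncPoly K n, trStar K σ n b = -b →
          trGamma K σ n ψ₀ b (φ y) = trGamma K σ n ψ₀ b y) ↔
        ∃ a : TruncPoly K n, a * trStar K σ n a = 1 ∧ ∀ y, φ y = a * y) ∧
    Nonempty (unitaryGroup K σ n ψ₀ ≃* normOneGroup K σ n) := by
  refine ⟨fun φ ↦ ⟨fun h ↦ ?_, ?_⟩, ⟨unitaryGroupEquiv h2 hσ hψ⟩⟩
  · exact ⟨φ 1, mul_trStar_eq_one_of_trGamma_eq h2 hσ hψ fun b hb ↦ h b 1 hb,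
      linearMap_apply_eq_apply_one_mul φ⟩
  · rintro ⟨a, ha, hφ⟩ b y -
    rw [hφ, trGamma_mul_left ha]

/-- a bijective `A_n`-linear map preserves `γ` iff it is
multiplication by some `a` with `a·a* = 1`; in particular the unitary group is
isomorphic to `{a : a·a* = 1}`. -/
theorem unitary_group_description
    (p t q : ℕ) (hp : p.Prime) (hp2 : Odd p) (ht : 0 < t) (hq : q = p ^ t)
    (k K : Type) [Field k] [Fintype k] [Field K] [Fintype K] [Algebra k K]
    (hcardk : Fintype.card k = q) (hcardK : Fintype.card K = q ^ 2)
    (Δ : K) (hΔ : Δ ∉ Set.range (algebraMap k K))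
    (hΔ2 : Δ ^ 2 ∈ Set.range (algebraMap k K))
    (σ : K →+* K) (hσk : ∀ c : k, σ (algebraMap k K c) = algebraMap k K c)
    (hσne : σ ≠ RingHom.id K) (hσΔ : σ Δ = -Δ)
    (n : ℕ) (hn : 0 < n)
    (ψ₀ : AddChar K ℂ)
    (hψk : ∃ c : k, ψ₀ (algebraMap k K c) ≠ 1)
    (hψΔ : ∃ c : k, ψ₀ (Δ * algebraMap k K c) ≠ 1) :
    (∀ φ : TruncPoly K n →ₗ[TruncPoly K n] TruncPoly K n, Function.Bijective φ →
      ((∀ b y : TruncPoly K n, trStar K σ n b = -b →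
          trGamma K σ n ψ₀ b (φ y) = trGamma K σ n ψ₀ b y) ↔
        ∃ a : TruncPoly K n, a * trStar K σ n a = 1 ∧ ∀ y, φ y = a * y)) ∧
    Nonempty (unitaryGroup K σ n ψ₀ ≃* normOneGroup K σ n) := by
  have h2 : (2 : K) ≠ 0 := two_ne_zero_of_odd_card (hcardK ▸ hq ▸ hp2.pow.pow)
  have hfinrank : Module.finrank k K = 2 := finrank_eq_of_card_eq_pow (hcardk ▸ hcardK)
  have hσ : Function.Involutive σ := involutive_of_adjoin_singleton_eq_top (σ := ⟨σ, hσk⟩)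
    (adjoin_singleton_eq_top_of_finrank_prime (hfinrank ▸ Nat.prime_two) hΔ) (by simp [hσΔ])
  have hψ : ∃ d, σ d = (-1) ^ n * d ∧ ψ₀ d ≠ 1 :=
    exists_apply_eq_neg_one_pow_mul_and_addChar_ne_one
      (hψk.imp' (algebraMap k K) fun c hc ↦ ⟨hσk c, hc⟩)
      (hψΔ.imp' (Δ * algebraMap k K ·) fun c hc ↦ ⟨by simp [hσk, hσΔ], hc⟩) n
  have h := unitary_group_description_general h2 hσ hψ
  exact ⟨fun φ _ ↦ h.1 φ, h.2⟩
end
end
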